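/- If a family ℱ of 3-graphs does not satisfy a palette 𝒫 (i.e., no member of ℱ satisfies 𝒫), then π_▽(ℱ) ≥ Λ^▽_𝒫. -/

import Mathlib

open Finset

/-- A 3-uniform hypergraph: a finite vertex set (of naturals) together with a set of
3-element subsets of it as edges. -/
structure ThreeGraph where
  verts : Finset ℕ
  edges : Finset (Finset ℕ)
  edge_sub : ∀ e ∈ edges, e ⊆ verts
  edge_card : ∀ e ∈ edges, e.card = 3

/-- `F` occurs as a subhypergraph of `H`. -/
def IsSubhypergraph (F H : ThreeGraph) : Prop :=
  ∃ f : ℕ → ℕ, Set.InjOn f ↑F.verts ∧ (∀ v ∈ F.verts, f v ∈ H.verts) ∧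
    ∀ e ∈ F.edges, e.image f ∈ H.edges

noncomputable section

/-- Number of triples `(x,y,z) ∈ X × Y × Z` with `{x,y,z}` an edge of `H`. -/
def eVVV (H : ThreeGraph) (X Y Z : Finset ℕ) : ℕ :=
  ((X ×ˢ Y ×ˢ Z).filter fun p => ({p.1, p.2.1, p.2.2} : Finset ℕ) ∈ H.edges).card

/-- `H` is `(d,η,▽)`-dense. -/
def IsDenseVVV (H : ThreeGraph) (d η : ℝ) : Prop :=
  ∀ X Y Z : Finset ℕ, X ⊆ H.verts → Y ⊆ H.verts → Z ⊆ H.verts →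
    (eVVV H X Y Z : ℝ) ≥ d * X.card * Y.card * Z.card - η * (H.verts.card : ℝ) ^ 3

/-- Number of ordered triples `(x,y,z)` with `x ∈ X`, `{y,z} ∈ P` and `{x,y,z}` an edge. -/
def eEV (H : ThreeGraph) (X : Finset ℕ) (P : Finset (Finset ℕ)) : ℕ :=
  ((X ×ˢ H.verts ×ˢ H.verts).filter fun p =>
    ({p.2.1, p.2.2} : Finset ℕ) ∈ P ∧ ({p.1, p.2.1, p.2.2} : Finset ℕ) ∈ H.edges).card

/-- `H` is `(d,η,e↦v)`-dense. -/
def IsDenseEV (H : ThreeGraph) (d η : ℝ) : Prop :=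
  ∀ (X : Finset ℕ) (P : Finset (Finset ℕ)), X ⊆ H.verts →
    (∀ p ∈ P, p ⊆ H.verts ∧ p.card = 2) →
    (eEV H X P : ℝ) ≥ d * X.card * P.card - η * (H.verts.card : ℝ) ^ 3

/-- `K_{ee}(P,Q)`: ordered triples `(x,y,z)` with `{x,y} ∈ P` and `{y,z} ∈ Q`. -/
def KEE (H : ThreeGraph) (P Q : Finset (Finset ℕ)) : Finset (ℕ × ℕ × ℕ) :=
  (H.verts ×ˢ H.verts ×ˢ H.verts).filter fun p =>
    ({p.1, p.2.1} : Finset ℕ) ∈ P ∧ ({p.2.1, p.2.2} : Finset ℕ) ∈ Q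

/-- Number of triples in `K_{ee}(P,Q)` forming an edge of `H`. -/
def eEE (H : ThreeGraph) (P Q : Finset (Finset ℕ)) : ℕ :=
  ((KEE H P Q).filter fun p => ({p.1, p.2.1, p.2.2} : Finset ℕ) ∈ H.edges).card

/-- `H` is `(d,η,ee)`-dense. -/
def IsDenseEE (H : ThreeGraph) (d η : ℝ) : Prop :=
  ∀ P Q : Finset (Finset ℕ),
    (∀ p ∈ P, p ⊆ H.verts ∧ p.card = 2) → (∀ q ∈ Q, q ⊆ H.verts ∧ q.card = 2) →
    (eEE H P Q : ℝ) ≥ d * (KEE H P Q).card - η * (H.verts.card : ℝ) ^ 3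

/-- The uniform Turán density `π_▽(𝓕)` of a family `𝓕` of 3-graphs. -/
def piVVV (𝓕 : Set ThreeGraph) : ℝ :=
  sSup {d : ℝ | 0 ≤ d ∧ d ≤ 1 ∧ ∀ η : ℝ, 0 < η → ∀ n : ℕ,
    ∃ H : ThreeGraph, n ≤ H.verts.card ∧ (∀ F ∈ 𝓕, ¬ IsSubhypergraph F H) ∧
      IsDenseVVV H d η}

/-- The uniform Turán density `π_{e↦v}(𝓕)` of a family `𝓕` of 3-graphs. -/
def piEV (𝓕 : Set ThreeGraph) : ℝ :=
  sSup {d : ℝ | 0 ≤ d ∧ d ≤ 1 ∧ ∀ η : ℝ, 0 < η → ∀ n : ℕ,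
    ∃ H : ThreeGraph, n ≤ H.verts.card ∧ (∀ F ∈ 𝓕, ¬ IsSubhypergraph F H) ∧
      IsDenseEV H d η}

/-- The uniform Turán density `π_{ee}(𝓕)` of a family `𝓕` of 3-graphs. -/
def piEE (𝓕 : Set ThreeGraph) : ℝ :=
  sSup {d : ℝ | 0 ≤ d ∧ d ≤ 1 ∧ ∀ η : ℝ, 0 < η → ∀ n : ℕ,
    ∃ H : ThreeGraph, n ≤ H.verts.card ∧ (∀ F ∈ 𝓕, ¬ IsSubhypergraph F H) ∧
      IsDenseEE H d η}

/-- A palette: a finite set of ordered triples of natural numbers (colours). -/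
abbrev Palette := Finset (ℕ × ℕ × ℕ)

/-- The set of colours `Φ(𝒫)` of a palette. -/
def palColours (P : Palette) : Finset ℕ :=
  P.image (·.1) ∪ P.image (·.2.1) ∪ P.image (·.2.2)

/-- A weighting of a palette: nonnegative weights on the colours summing to 1. -/
def IsWeighting (P : Palette) (x : ℕ → ℝ) : Prop :=
  (∀ a ∈ palColours P, 0 ≤ x a) ∧ ∑ a ∈ palColours P, x a = 1

/-- `λ^▽_𝒫(x) = Σ_{(a,b,c) ∈ 𝒫} x_a x_b x_c`. -/
def lamVVV (P : Palette) (x : ℕ → ℝ) : ℝ :=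
  ∑ p ∈ P, x p.1 * x p.2.1 * x p.2.2

/-- The palette Lagrangian `Λ^▽_𝒫`. -/
def LambdaVVV (P : Palette) : ℝ :=
  sSup {l : ℝ | ∃ x : ℕ → ℝ, IsWeighting P x ∧ l = lamVVV P x}

/-- The ordered degree Lagrangian `λ^a_𝒫(x)`. -/
def lamDeg (P : Palette) (a : ℕ) (x : ℕ → ℝ) : ℝ :=
  min (min (∑ p ∈ P.filter (fun p => p.1 = a), x p.2.1 * x p.2.2)
           (∑ p ∈ P.filter (fun p => p.2.1 = a), x p.1 * x p.2.2))
      (∑ p ∈ P.filter (fun p => p.2.2 = a), x p.1 * x p.2.1)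

/-- `λ^{e↦v}_𝒫(x)`: minimum of `λ^a_𝒫(x)` over colours `a` with positive weight. -/
def lamEV (P : Palette) (x : ℕ → ℝ) : ℝ :=
  sInf {l : ℝ | ∃ a ∈ palColours P, 0 < x a ∧ l = lamDeg P a x}

/-- The palette Lagrangian `Λ^{e↦v}_𝒫`. -/
def LambdaEV (P : Palette) : ℝ :=
  sSup {l : ℝ | ∃ x : ℕ → ℝ, IsWeighting P x ∧ l = lamEV P x}

/-- The ordered codegree Lagrangian `λ^{a,b}_𝒫(x)`. -/
def lamCodeg (P : Palette) (a b : ℕ) (x : ℕ → ℝ) : ℝ :=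
  min (min (min (∑ p ∈ P.filter (fun p => p.1 = a ∧ p.2.1 = b), x p.2.2)
                (∑ p ∈ P.filter (fun p => p.1 = b ∧ p.2.1 = a), x p.2.2))
           (min (∑ p ∈ P.filter (fun p => p.1 = a ∧ p.2.2 = b), x p.2.1)
                (∑ p ∈ P.filter (fun p => p.1 = b ∧ p.2.2 = a), x p.2.1)))
      (min (∑ p ∈ P.filter (fun p => p.2.1 = a ∧ p.2.2 = b), x p.1)
           (∑ p ∈ P.filter (fun p => p.2.1 = b ∧ p.2.2 = a), x p.1))

/-- `λ^{ee}_𝒫(x)`: minimum of `λ^{a,b}_𝒫(x)` over colours `a,b` with positive weight. -/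
def lamEE (P : Palette) (x : ℕ → ℝ) : ℝ :=
  sInf {l : ℝ | ∃ a ∈ palColours P, ∃ b ∈ palColours P, 0 < x a * x b ∧ l = lamCodeg P a b x}

/-- The palette Lagrangian `Λ^{ee}_𝒫`. -/
def LambdaEE (P : Palette) : ℝ :=
  sSup {l : ℝ | ∃ x : ℕ → ℝ, IsWeighting P x ∧ l = lamEE P x}

/-- A 3-graph `H` satisfies a palette `P`: there is an ordering of the vertices (an
injection `ord` into `ℕ`) and a colouring `φ` of the pairs of vertices with colours in
`Φ(P)` such that the ordered shadow of every edge is a triple of the palette. -/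
def Satisfies (H : ThreeGraph) (P : Palette) : Prop :=
  ∃ (ord : ℕ → ℕ) (φ : Finset ℕ → ℕ),
    Set.InjOn ord ↑H.verts ∧
    (∀ u ∈ H.verts, ∀ v ∈ H.verts, u ≠ v → φ {u, v} ∈ palColours P) ∧
    ∀ u v w : ℕ, ({u, v, w} : Finset ℕ) ∈ H.edges →
      ord u < ord v → ord v < ord w →
      (φ {u, v}, φ {v, w}, φ {u, w}) ∈ P

/-- Delete a set of edges from a 3-graph. -/
def ThreeGraph.deleteEdges (H : ThreeGraph) (R : Finset (Finset ℕ)) : ThreeGraph where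
  verts := H.verts
  edges := H.edges \ R
  edge_sub := fun e he => H.edge_sub e (Finset.mem_sdiff.mp he).1
  edge_card := fun e he => H.edge_card e (Finset.mem_sdiff.mp he).1

/-- `H` α-almost satisfies `P`: one can remove at most `α·|V(H)|³` edges so that the
resulting 3-graph satisfies `P`. -/
def AlmostSatisfies (H : ThreeGraph) (P : Palette) (α : ℝ) : Prop :=
  ∃ R ⊆ H.edges, (R.card : ℝ) ≤ α * (H.verts.card : ℝ) ^ 3 ∧
    Satisfies (H.deleteEdges R) P

/-- The Lagrange polynomial `λ_F(x) = 3! Σ_{e ∈ E(F)} Π_{v ∈ e} x_v` of a 3-graph. -/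
def lagrangePoly (F : ThreeGraph) (x : ℕ → ℝ) : ℝ :=
  6 * ∑ e ∈ F.edges, ∏ v ∈ e, x v

/-- The Lagrangian `Λ_F` of a 3-graph: the supremum of the Lagrange polynomial over the
standard simplex on the vertices. -/
def lagrangian (F : ThreeGraph) : ℝ :=
  sSup {l : ℝ | ∃ x : ℕ → ℝ, (∀ v ∈ F.verts, 0 ≤ x v ∧ x v ≤ 1) ∧
    (∑ v ∈ F.verts, x v = 1) ∧ l = lagrangePoly F x}

end

/-!
Fix a weighting `w` of the palette `P`. Colour the pairs `x < y` of `{0, …, n - 1}` independently at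
random, using colour `a` with probability `w a`, and let `H` consist of the triples whose colours, in
increasing order of the vertices, lie in `P`. By construction `H` satisfies `P`, a property inherited
by subhypergraphs (`Satisfies.of_isSubhypergraph`), so `H` contains no member of `𝓕`. A triple is an
edge with probability `lamVVV P w`, so it is enough to find one colouring for which edge counts are
concentrated for all `X, Y, Z` at once; then `lamVVV P w ≤ piVVV 𝓕`, and the supremum over `w` gives
the claim.

Concentration is obtained from a fourth-moment argument instead of a union bound over subsets. Put
`A x y = 1[x < y] * (1[C x y = a] - w a)`. Cauchy–Schwarz (`cut_le`) gives
`(∑ x y, u x * v y * A x y) ^ 4 ≤ n ^ 4 * ∑ y y', (∑ x, A x y * A x y') ^ 2` for all `u, v` bounded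
by `1`. Expanding the square on the right, every term with `x ≠ x'` and `y ≠ y'` has mean zero, so
its expectation is `O(n ^ 3)`. Hence some colouring has all colour classes quasirandom, with error
`O(n ^ (7 / 4)) = o(n ^ 2)` (`exists_colouring_fin`), and replacing the indicators of the three pairs
of a triple by their means one after another (`triangle_count`) yields the edge counts up to
`o(n ^ 3)`.
-/

/-! ### Random colourings and quasirandomness -/

lemma abs_mul_le_one {p q : ℝ} (hp : |p| ≤ 1) (hq : |q| ≤ 1) : |p * q| ≤ 1 := by
  rw [abs_mul]
  exact mul_le_one₀ hp (abs_nonneg _) hq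

/-- The expectation of `f c` for a random colouring `c : E → ℕ` whose values are independent, each
equal to `a ∈ S` with probability `w a`. It is written as a finite weighted sum, and is a genuine
expectation only when `w` is nonnegative on `S` and sums to `1` there. -/
noncomputable def colExpect {E : Type*} [Fintype E] [DecidableEq E] (S : Finset ℕ) (w : ℕ → ℝ)
    (f : (E → ℕ) → ℝ) : ℝ :=
  ∑ c ∈ Fintype.piFinset (fun _ : E => S), (∏ e, w (c e)) * f c

section colExpect
variable {E : Type*} [Fintype E] [DecidableEq E] {S : Finset ℕ} {w : ℕ → ℝ}

lemma colExpect_prod (g : E → ℕ → ℝ) :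
    colExpect S w (fun c => ∏ e, g e (c e)) = ∏ e, ∑ a ∈ S, w a * g e a := by
  unfold colExpect
  rw [Finset.prod_univ_sum]
  simp only [Finset.prod_mul_distrib]

lemma colExpect_const (hw1 : ∑ a ∈ S, w a = 1) (r : ℝ) :
    colExpect (E := E) S w (fun _ => r) = r := by
  have h := colExpect_prod (E := E) (S := S) (w := w) (fun _ _ => 1)
  simp only [Finset.prod_const_one, mul_one, hw1] at h
  unfold colExpect at h ⊢
  rw [← Finset.sum_mul]
  simp only [mul_one] at h
  rw [h, one_mul]

lemma colExpect_sum {ι : Type*} (s : Finset ι) (f : ι → (E → ℕ) → ℝ) :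
    colExpect S w (fun c => ∑ i ∈ s, f i c) = ∑ i ∈ s, colExpect S w (f i) := by
  unfold colExpect
  simp only [Finset.mul_sum]
  exact Finset.sum_comm

lemma colExpect_mono (hw0 : ∀ a ∈ S, 0 ≤ w a) {f g : (E → ℕ) → ℝ}
    (h : ∀ c, (∀ e, c e ∈ S) → f c ≤ g c) : colExpect S w f ≤ colExpect S w g := by
  refine Finset.sum_le_sum fun c hc => ?_
  rw [Fintype.mem_piFinset] at hc
  exact mul_le_mul_of_nonneg_left (h c hc) (Finset.prod_nonneg fun e _ => hw0 _ (hc e))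

lemma exists_le_of_colExpect_le (hw0 : ∀ a ∈ S, 0 ≤ w a) (hw1 : ∑ a ∈ S, w a = 1)
    {f : (E → ℕ) → ℝ} {r : ℝ} (h : colExpect S w f ≤ r) :
    ∃ c : E → ℕ, (∀ e, c e ∈ S) ∧ f c ≤ r := by
  by_contra! hc
  have hne : (Fintype.piFinset (fun _ : E => S)).Nonempty := by
    rw [Fintype.piFinset_nonempty]
    intro _
    by_contra hS
    rw [Finset.not_nonempty_iff_eq_empty] at hS
    simp [hS] at hw1
  -- the least value of `f` exceeds `r`, hence so does the expectation
  obtain ⟨c₀, hc₀, hmin⟩ := Finset.exists_min_image _ f hne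
  have h1 := colExpect_mono (E := E) (S := S) (w := w) hw0 (f := fun _ => f c₀) (g := f)
    fun c hcS => hmin c (Fintype.mem_piFinset.2 hcS)
  rw [colExpect_const hw1] at h1
  exact absurd (h1.trans h) (not_le.2 (hc c₀ (Fintype.mem_piFinset.1 hc₀)))

/-- A product of four factors read off at distinct coordinates has expectation zero as soon as one
of them has mean zero. -/
lemma colExpect_four_eq_zero {A : E → ℕ → ℝ} {e₁ e₂ e₃ e₄ : E}
    (h12 : e₁ ≠ e₂) (h13 : e₁ ≠ e₃) (h14 : e₁ ≠ e₄) (h23 : e₂ ≠ e₃) (h24 : e₂ ≠ e₄)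
    (h34 : e₃ ≠ e₄) (hA : ∑ a ∈ S, w a * A e₁ a = 0) :
    colExpect S w (fun c => A e₁ (c e₁) * A e₂ (c e₂) * (A e₃ (c e₃) * A e₄ (c e₄))) = 0 := by
  have key : ∀ c : E → ℕ, A e₁ (c e₁) * A e₂ (c e₂) * (A e₃ (c e₃) * A e₄ (c e₄)) =
      ∏ e, if e ∈ ({e₁, e₂, e₃, e₄} : Finset E) then A e (c e) else 1 := by
    intro c
    rw [Finset.prod_ite_mem, Finset.univ_inter, Finset.prod_insert (by simp [*]),
      Finset.prod_insert (by simp [*]), Finset.prod_pair h34]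
    ring
  simp only [key]
  rw [colExpect_prod (fun e a => if e ∈ ({e₁, e₂, e₃, e₄} : Finset E) then A e a else 1)]
  exact Finset.prod_eq_zero (Finset.mem_univ e₁) (by simpa using hA)
end colExpect

lemma sum_sq_pairs {n : ℕ} (A : Fin n → Fin n → ℝ) :
    ∑ y, ∑ y', (∑ x, A x y * A x y') ^ 2 =
      ∑ y, ∑ y', ∑ x, ∑ x', A x y * A x y' * (A x' y * A x' y') := by
  simp only [sq, Finset.sum_mul_sum]

/-- Two applications of Cauchy–Schwarz bound the cut norm of a matrix by a quantity that no longer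
involves the test vectors `u`, `v`. -/
lemma cut_le {n : ℕ} (A : Fin n → Fin n → ℝ) (u v : Fin n → ℝ)
    (hu : ∀ x, |u x| ≤ 1) (hv : ∀ y, |v y| ≤ 1) :
    (∑ x, ∑ y, u x * v y * A x y) ^ 4 ≤
      (n : ℝ) ^ 4 * ∑ y, ∑ y', (∑ x, A x y * A x y') ^ 2 := by
  have hu2 : ∑ x, u x ^ 2 ≤ (n : ℝ) := by
    calc ∑ x, u x ^ 2 ≤ ∑ x : Fin n, (1 : ℝ) :=
          Finset.sum_le_sum fun x _ => (sq_le_one_iff_abs_le_one _).2 (hu x)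
      _ = n := by simp
  have hv2 : ∑ p : Fin n × Fin n, (v p.1 * v p.2) ^ 2 ≤ (n : ℝ) ^ 2 := by
    calc ∑ p : Fin n × Fin n, (v p.1 * v p.2) ^ 2 ≤ ∑ p : Fin n × Fin n, (1 : ℝ) := by
          refine Finset.sum_le_sum fun p _ => (sq_le_one_iff_abs_le_one _).2 ?_
          exact abs_mul_le_one (hv _) (hv _)
      _ = (n : ℝ) ^ 2 := by simp [sq]
  set R := ∑ x, (∑ y, v y * A x y) ^ 2 with hR
  have h1 : (∑ x, ∑ y, u x * v y * A x y) ^ 2 ≤ n * R := by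
    calc (∑ x, ∑ y, u x * v y * A x y) ^ 2 = (∑ x, u x * ∑ y, v y * A x y) ^ 2 := by
          simp only [Finset.mul_sum, mul_assoc]
      _ ≤ (∑ x, u x ^ 2) * R := Finset.sum_mul_sq_le_sq_mul_sq _ _ _
      _ ≤ n * R := mul_le_mul_of_nonneg_right hu2 (Finset.sum_nonneg fun _ _ => sq_nonneg _)
  have h2 : R = ∑ p : Fin n × Fin n, (v p.1 * v p.2) * ∑ x, A x p.1 * A x p.2 := by
    rw [hR, Fintype.sum_prod_type]
    simp only [sq, Finset.sum_mul_sum]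
    simp only [Finset.mul_sum]
    rw [Finset.sum_comm]
    refine Finset.sum_congr rfl fun y _ => ?_
    rw [Finset.sum_comm]
    exact Finset.sum_congr rfl fun y' _ => Finset.sum_congr rfl fun x _ => by ring
  have h3 : R ^ 2 ≤ (n : ℝ) ^ 2 * ∑ y, ∑ y', (∑ x, A x y * A x y') ^ 2 := by
    rw [h2, ← Fintype.sum_prod_type' (f := fun y y' => (∑ x, A x y * A x y') ^ 2)]
    exact (Finset.sum_mul_sq_le_sq_mul_sq _ _ _).trans
      (mul_le_mul_of_nonneg_right hv2 (Finset.sum_nonneg fun _ _ => sq_nonneg _))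
  calc (∑ x, ∑ y, u x * v y * A x y) ^ 4 = ((∑ x, ∑ y, u x * v y * A x y) ^ 2) ^ 2 := by ring
    _ ≤ (n * R) ^ 2 := pow_le_pow_left₀ (sq_nonneg _) h1 2
    _ = (n : ℝ) ^ 2 * R ^ 2 := by ring
    _ ≤ (n : ℝ) ^ 2 * ((n : ℝ) ^ 2 * ∑ y, ∑ y', (∑ x, A x y * A x y') ^ 2) := by gcongr
    _ = _ := by ring

/-- Some `S`-colouring of the pairs has every colour class `a` quasirandom of density `w a`, with
respect to arbitrary test vectors `u`, `v`. The fixed weight `t` allows restricting to the pairs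
`x < y`, which is not a product condition and so cannot be absorbed into `u` and `v`. -/
lemma exists_colouring_fin (n : ℕ) (S : Finset ℕ) (w : ℕ → ℝ) (hw0 : ∀ a ∈ S, 0 ≤ w a)
    (hw1 : ∑ a ∈ S, w a = 1) (t : Fin n → Fin n → ℝ) (ht : ∀ x y, |t x y| ≤ 1) :
    ∃ c : Fin n → Fin n → ℕ, (∀ x y, c x y ∈ S) ∧ ∀ a ∈ S, ∀ u v : Fin n → ℝ,
      (∀ x, |u x| ≤ 1) → (∀ y, |v y| ≤ 1) →
      (∑ x, ∑ y, u x * v y * (t x y * ((if c x y = a then 1 else 0) - w a))) ^ 4 ≤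
        2 * S.card * (n : ℝ) ^ 7 := by
  have hwle : ∀ a ∈ S, w a ≤ 1 := fun a ha => hw1 ▸ Finset.single_le_sum hw0 ha
  let A : ℕ → Fin n × Fin n → ℕ → ℝ := fun a e b => t e.1 e.2 * ((if b = a then 1 else 0) - w a)
  have hA1 : ∀ a ∈ S, ∀ e b, |A a e b| ≤ 1 := by
    intro a ha e b
    refine abs_mul_le_one (ht _ _) ?_
    rw [abs_le]
    have := hw0 a ha
    have := hwle a ha
    split_ifs <;> constructor <;> linarith
  have hA0 : ∀ a ∈ S, ∀ e, ∑ b ∈ S, w b * A a e b = 0 := by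
    intro a ha e
    have : ∀ b, w b * A a e b = t e.1 e.2 * ((if b = a then w b else 0) - w b * w a) := by
      intro b
      simp only [A]
      split_ifs <;> ring
    simp only [this, ← Finset.mul_sum, Finset.sum_sub_distrib, ← Finset.sum_mul, hw1,
      Finset.sum_ite_eq', ha, if_true]
    ring
  let Q : ℕ → (Fin n × Fin n → ℕ) → ℝ := fun a c =>
    ∑ y, ∑ y', (∑ x, A a (x, y) (c (x, y)) * A a (x, y') (c (x, y'))) ^ 2
  have hQ0 : ∀ a c, 0 ≤ Q a c := fun a c =>
    Finset.sum_nonneg fun _ _ => Finset.sum_nonneg fun _ _ => sq_nonneg _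
  have hEQ : ∀ a ∈ S, colExpect S w (Q a) ≤ 2 * (n : ℝ) ^ 3 := by
    intro a ha
    have hform : ∀ c : Fin n × Fin n → ℕ,
        ∑ y, ∑ y', (∑ x, A a (x, y) (c (x, y)) * A a (x, y') (c (x, y'))) ^ 2 =
        ∑ y, ∑ y', ∑ x, ∑ x', A a (x, y) (c (x, y)) * A a (x, y') (c (x, y')) *
          (A a (x', y) (c (x', y)) * A a (x', y') (c (x', y'))) :=
      fun c => sum_sq_pairs (fun x y => A a (x, y) (c (x, y)))
    simp only [Q, hform, colExpect_sum]
    -- when `x ≠ x'` and `y ≠ y'` the four pairs are distinct, so only degenerate terms survive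
    have hterm : ∀ y y' x x' : Fin n, colExpect S w (fun c =>
        A a (x, y) (c (x, y)) * A a (x, y') (c (x, y')) *
          (A a (x', y) (c (x', y)) * A a (x', y') (c (x', y')))) ≤
        (if x = x' then 1 else 0) + (if y = y' then 1 else 0) := by
      intro y y' x x'
      by_cases hdeg : x ≠ x' ∧ y ≠ y'
      · obtain ⟨hx, hy⟩ := hdeg
        rw [colExpect_four_eq_zero (by simp [hy]) (by simp [hx]) (by simp [hx]) (by simp [hx])
          (by simp [hx]) (by simp [hy]) (hA0 a ha _)]
        simp [hx, hy]
      · refine le_trans (?_ : _ ≤ (1 : ℝ)) ?_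
        · rw [← colExpect_const (E := Fin n × Fin n) hw1 1]
          refine colExpect_mono hw0 fun c _ => (le_abs_self _).trans ?_
          exact abs_mul_le_one (abs_mul_le_one (hA1 a ha _ _) (hA1 a ha _ _))
            (abs_mul_le_one (hA1 a ha _ _) (hA1 a ha _ _))
        · by_cases hx : x = x'
          · rw [if_pos hx]
            split_ifs <;> norm_num
          · have hy : y = y' := by tauto
            rw [if_neg hx, if_pos hy, zero_add]
    calc _ ≤ ∑ y : Fin n, ∑ y' : Fin n, ∑ x : Fin n, ∑ x' : Fin n,
          ((if x = x' then 1 else 0) + (if y = y' then (1 : ℝ) else 0)) := by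
          refine Finset.sum_le_sum fun y _ => Finset.sum_le_sum fun y' _ =>
            Finset.sum_le_sum fun x _ => Finset.sum_le_sum fun x' _ => hterm y y' x x'
      _ = 2 * (n : ℝ) ^ 3 := by
          simp [Finset.sum_add_distrib]
          ring
  obtain ⟨c, hcS, hc⟩ := exists_le_of_colExpect_le hw0 hw1
    (f := fun c : Fin n × Fin n → ℕ => ∑ a ∈ S, Q a c) (r := 2 * S.card * (n : ℝ) ^ 3) (by
      rw [colExpect_sum]
      refine (Finset.sum_le_sum hEQ).trans (le_of_eq ?_)
      simp
      ring)
  refine ⟨fun x y => c (x, y), fun x y => hcS _, fun a ha u v hu hv => ?_⟩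
  have hQa : Q a c ≤ 2 * S.card * (n : ℝ) ^ 3 :=
    (Finset.single_le_sum (f := fun a => Q a c) (fun a _ => hQ0 a c) ha).trans hc
  calc _ ≤ (n : ℝ) ^ 4 * Q a c := cut_le (fun x y => A a (x, y) (c (x, y))) u v hu hv
    _ ≤ (n : ℝ) ^ 4 * (2 * S.card * (n : ℝ) ^ 3) := by gcongr
    _ = _ := by ring

/-! ### Counting triples in a quasirandom colouring -/

/-- The real-valued indicator of a proposition, decided classically. -/
noncomputable def ind (p : Prop) : ℝ := open Classical in if p then 1 else 0

lemma ind_nonneg (p : Prop) : 0 ≤ ind p := by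
  unfold ind; split_ifs <;> norm_num

lemma ind_le_one (p : Prop) : ind p ≤ 1 := by
  unfold ind; split_ifs <;> norm_num

lemma abs_ind_le_one (p : Prop) : |ind p| ≤ 1 := by
  rw [abs_of_nonneg (ind_nonneg p)]; exact ind_le_one p

lemma ind_pos {p : Prop} (h : p) : ind p = 1 := by simp [ind, h]

lemma ind_neg {p : Prop} (h : ¬ p) : ind p = 0 := by simp [ind, h]

/-- The colouring of `exists_colouring_fin`, extended to all of `ℕ`, with error `ε n²` once `n` is
large. -/
lemma exists_colouring {n : ℕ} {S : Finset ℕ} {w : ℕ → ℝ} (hw0 : ∀ a ∈ S, 0 ≤ w a)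
    (hw1 : ∑ a ∈ S, w a = 1) {ε : ℝ} (hε : 0 ≤ ε) (hn : 2 * S.card ≤ ε ^ 4 * n) :
    ∃ C : ℕ → ℕ → ℕ, (∀ x y, C x y ∈ S) ∧ ∀ a ∈ S, ∀ u v : ℕ → ℝ,
      (∀ x, |u x| ≤ 1) → (∀ y, |v y| ≤ 1) →
      |∑ x ∈ range n, ∑ y ∈ range n, u x * v y * (ind (x < y) * (ind (C x y = a) - w a))| ≤
        ε * (n : ℝ) ^ 2 := by
  obtain ⟨a₀, ha₀⟩ : S.Nonempty := by
    rw [Finset.nonempty_iff_ne_empty]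
    rintro rfl
    simp at hw1
  obtain ⟨c, hcS, hc⟩ := exists_colouring_fin n S w hw0 hw1
    (fun x y => ind ((x : ℕ) < y)) (fun _ _ => abs_ind_le_one _)
  refine ⟨fun x y => if h : x < n ∧ y < n then c ⟨x, h.1⟩ ⟨y, h.2⟩ else a₀, fun x y => ?_,
    fun a ha u v hu hv => ?_⟩
  · dsimp only
    split_ifs
    · exact hcS _ _
    · exact ha₀
  · have h := hc a ha (fun x => u x) (fun y => v y) (fun _ => hu _) (fun _ => hv _)
    simp only [Finset.sum_range, Fin.is_lt, and_self, dite_true, Fin.eta]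
    have hind : ∀ x y, (if c x y = a then (1 : ℝ) else 0) = ind (c x y = a) := fun x y => by
      unfold ind; split_ifs <;> rfl
    simp only [hind] at h
    rw [← pow_le_pow_iff_left₀ (abs_nonneg _) (by positivity) four_ne_zero, Even.pow_abs (by decide)]
    calc _ ≤ _ := h
      _ ≤ ε ^ 4 * n * (n : ℝ) ^ 7 := by gcongr
      _ = _ := by ring

/-- The sum of `f` over all ordered triples of elements of `{0, …, n - 1}`. -/
noncomputable def sum3 (n : ℕ) (f : ℕ → ℕ → ℕ → ℝ) : ℝ :=
  ∑ x ∈ range n, ∑ y ∈ range n, ∑ z ∈ range n, f x y z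

lemma sum3_swap₁₂ (n : ℕ) (f : ℕ → ℕ → ℕ → ℝ) :
    sum3 n f = sum3 n fun x y z => f y x z := by
  unfold sum3
  exact Finset.sum_comm

lemma sum3_swap₂₃ (n : ℕ) (f : ℕ → ℕ → ℕ → ℝ) :
    sum3 n f = sum3 n fun x y z => f x z y := by
  unfold sum3
  exact Finset.sum_congr rfl fun _ _ => Finset.sum_comm

lemma sum3_add (n : ℕ) (f g : ℕ → ℕ → ℕ → ℝ) :
    sum3 n (fun x y z => f x y z + g x y z) = sum3 n f + sum3 n g := by
  simp only [sum3, Finset.sum_add_distrib]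

lemma sum3_mono {n : ℕ} {f g : ℕ → ℕ → ℕ → ℝ}
    (h : ∀ x < n, ∀ y < n, ∀ z < n, f x y z ≤ g x y z) : sum3 n f ≤ sum3 n g :=
  Finset.sum_le_sum fun x hx => Finset.sum_le_sum fun y hy => Finset.sum_le_sum fun z hz =>
    h x (mem_range.1 hx) y (mem_range.1 hy) z (mem_range.1 hz)

lemma sum3_sum (n : ℕ) {ι : Type*} (s : Finset ι) (f : ι → ℕ → ℕ → ℕ → ℝ) :
    sum3 n (fun x y z => ∑ i ∈ s, f i x y z) = ∑ i ∈ s, sum3 n (f i) := by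
  unfold sum3
  symm
  rw [Finset.sum_comm]
  refine Finset.sum_congr rfl fun x _ => ?_
  rw [Finset.sum_comm]
  refine Finset.sum_congr rfl fun y _ => ?_
  rw [Finset.sum_comm]

lemma abs_sum3_le {n : ℕ} {f : ℕ → ℕ → ℕ → ℝ} {r : ℝ}
    (h : ∀ x, |∑ y ∈ range n, ∑ z ∈ range n, f x y z| ≤ r) : |sum3 n f| ≤ n * r := by
  calc |sum3 n f| ≤ ∑ x ∈ range n, |∑ y ∈ range n, ∑ z ∈ range n, f x y z| :=
        Finset.abs_sum_le_sum_abs _ _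
    _ ≤ ∑ x ∈ range n, r := Finset.sum_le_sum fun x _ => h x
    _ = n * r := by simp

/-- Counting lemma: in a colouring with quasirandom colour classes, the increasing triples whose
pairs have colours `(a, b, d)` have density about `w a * w b * w d`, in weighted form. The three
colour indicators are replaced by their means one at a time; each replacement is controlled by the
hypothesis applied with the third vertex fixed. -/
lemma triangle_count {n : ℕ} {S : Finset ℕ} {w : ℕ → ℝ} (hw : ∀ a ∈ S, |w a| ≤ 1)
    {C : ℕ → ℕ → ℕ} {δ : ℝ}
    (hC : ∀ a ∈ S, ∀ u v : ℕ → ℝ, (∀ x, |u x| ≤ 1) → (∀ y, |v y| ≤ 1) →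
      |∑ x ∈ range n, ∑ y ∈ range n, u x * v y * (ind (x < y) * (ind (C x y = a) - w a))| ≤ δ)
    {a b d : ℕ} (ha : a ∈ S) (hb : b ∈ S) (hd : d ∈ S) {u v r : ℕ → ℝ}
    (hu : ∀ x, |u x| ≤ 1) (hv : ∀ x, |v x| ≤ 1) (hr : ∀ x, |r x| ≤ 1) :
    |sum3 n fun x y z => u x * v y * r z * (ind (x < y) * ind (y < z) *
      (ind (C x y = a) * ind (C y z = b) * ind (C x z = d) - w a * w b * w d))| ≤
      3 * (n * δ) := by
  let f₁ : ℕ → ℕ → ℕ → ℝ := fun x y z =>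
    (u x * ind (C x z = d)) * (v y * (r z * ind (C y z = b) * ind (y < z))) *
      (ind (x < y) * (ind (C x y = a) - w a))
  let f₂ : ℕ → ℕ → ℕ → ℝ := fun x y z =>
    (w a * (u x * v y * ind (x < y))) * (r z * ind (C x z = d)) *
      (ind (y < z) * (ind (C y z = b) - w b))
  let f₃ : ℕ → ℕ → ℕ → ℝ := fun x y z =>
    (w a * w b * (u x * ind (x < y))) * (v y * (r z * ind (y < z))) *
      (ind (x < z) * (ind (C x z = d) - w d))
  have h₁ : |sum3 n f₁| ≤ n * δ := by
    rw [sum3_swap₂₃, sum3_swap₁₂]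
    exact abs_sum3_le fun z => hC a ha _ _
      (fun x => abs_mul_le_one (hu x) (abs_ind_le_one _))
      fun y => abs_mul_le_one (hv y)
        (abs_mul_le_one (abs_mul_le_one (hr z) (abs_ind_le_one _)) (abs_ind_le_one _))
  have h₂ : |sum3 n f₂| ≤ n * δ :=
    abs_sum3_le fun x => hC b hb _ _
      (fun y => abs_mul_le_one (hw a ha)
        (abs_mul_le_one (abs_mul_le_one (hu x) (hv y)) (abs_ind_le_one _)))
      fun z => abs_mul_le_one (hr z) (abs_ind_le_one _)
  have h₃ : |sum3 n f₃| ≤ n * δ := by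
    rw [sum3_swap₁₂]
    exact abs_sum3_le fun y => hC d hd _ _
      (fun x => abs_mul_le_one (abs_mul_le_one (hw a ha) (hw b hb))
        (abs_mul_le_one (hu x) (abs_ind_le_one _)))
      fun z => abs_mul_le_one (hv y) (abs_mul_le_one (hr z) (abs_ind_le_one _))
  have hsplit : (sum3 n fun x y z => u x * v y * r z * (ind (x < y) * ind (y < z) *
      (ind (C x y = a) * ind (C y z = b) * ind (C x z = d) - w a * w b * w d))) =
      sum3 n f₁ + sum3 n f₂ + sum3 n f₃ := by
    rw [← sum3_add, ← sum3_add]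
    congr 1
    funext x y z
    simp only [f₁, f₂, f₃]
    by_cases hxy : x < y
    · by_cases hyz : y < z
      · rw [ind_pos hxy, ind_pos hyz, ind_pos (hxy.trans hyz)]
        ring
      · rw [ind_neg hyz]
        ring
    · rw [ind_neg hxy]
      ring
  rw [hsplit]
  have := abs_add_three (sum3 n f₁) (sum3 n f₂) (sum3 n f₃)
  linarith

/-! ### The 3-graph of a coloured complete graph -/

/-- The 3-graph on `{0, …, n - 1}` whose edges are the triples `i < j < k` for which the colours
`(C i j, C j k, C i k)` form a triple of the palette. Only the values `C i j` with `i < j` matter. -/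
noncomputable def paletteGraph (P : Palette) (C : ℕ → ℕ → ℕ) (n : ℕ) : ThreeGraph where
  verts := range n
  edges := open Classical in (powersetCard 3 (range n)).filter fun e =>
    ∃ i j k, i < j ∧ j < k ∧ e = {i, j, k} ∧ (C i j, C j k, C i k) ∈ P
  edge_sub e he := by
    classical exact (mem_powersetCard.1 (mem_filter.1 he).1).1
  edge_card e he := by
    classical exact (mem_powersetCard.1 (mem_filter.1 he).1).2

lemma mem_edges_paletteGraph {P : Palette} {C : ℕ → ℕ → ℕ} {n i j k : ℕ} (hij : i < j)
    (hjk : j < k) : ({i, j, k} : Finset ℕ) ∈ (paletteGraph P C n).edges ↔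
      k < n ∧ (C i j, C j k, C i k) ∈ P := by
  simp only [paletteGraph, mem_filter, mem_powersetCard]
  constructor
  · rintro ⟨⟨hsub, -⟩, i', j', k', hij', hjk', he, hP⟩
    refine ⟨mem_range.1 (hsub (by simp)), ?_⟩
    have h1 : i ∈ ({i', j', k'} : Finset ℕ) := he ▸ by simp
    have h2 : j ∈ ({i', j', k'} : Finset ℕ) := he ▸ by simp
    have h3 : k ∈ ({i', j', k'} : Finset ℕ) := he ▸ by simp
    simp only [mem_insert, mem_singleton] at h1 h2 h3
    obtain ⟨rfl, rfl, rfl⟩ : i = i' ∧ j = j' ∧ k = k' := by omega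
    exact hP
  · rintro ⟨hk, hP⟩
    refine ⟨⟨?_, ?_⟩, i, j, k, hij, hjk, rfl, hP⟩
    · intro x hx
      simp only [mem_insert, mem_singleton] at hx
      exact mem_range.2 (by omega)
    · exact card_eq_three.2 ⟨i, j, k, by omega, by omega, by omega, rfl⟩

lemma satisfies_paletteGraph {P : Palette} {C : ℕ → ℕ → ℕ} (hC : ∀ x y, C x y ∈ palColours P)
    (n : ℕ) : Satisfies (paletteGraph P C n) P := by
  -- a pair `e` has larger element `e.sup id`, and its smaller element is the sum minus that
  let φ : Finset ℕ → ℕ := fun e => C (e.sum id - e.sup id) (e.sup id)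
  have hφ : ∀ i j, i < j → φ {i, j} = C i j := by
    intro i j hij
    simp only [φ, Finset.sum_pair hij.ne, Finset.sup_insert, Finset.sup_singleton, id]
    rw [sup_of_le_right hij.le, Nat.add_sub_cancel]
  refine ⟨id, φ, Function.injective_id.injOn, fun _ _ _ _ _ => hC _ _, fun i j k he hij hjk => ?_⟩
  simp only [id] at hij hjk
  rw [hφ i j hij, hφ j k hjk, hφ i k (hij.trans hjk)]
  exact ((mem_edges_paletteGraph hij hjk).1 he).2

lemma Satisfies.of_isSubhypergraph {P : Palette} {F H : ThreeGraph} (hH : Satisfies H P)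
    (hF : IsSubhypergraph F H) : Satisfies F P := by
  obtain ⟨ord, φ, hord, hφ, hP⟩ := hH
  obtain ⟨f, hf, hv, he⟩ := hF
  refine ⟨ord ∘ f, fun e => φ (e.image f), hord.comp hf hv, fun u hu v hv' huv => ?_,
    fun u v w h huv hvw => ?_⟩
  · simp only [image_insert, image_singleton]
    exact hφ _ (hv u hu) _ (hv v hv') fun h => huv (hf hu hv' h)
  · simp only [image_insert, image_singleton]
    refine hP _ _ _ ?_ huv hvw
    simpa only [image_insert, image_singleton] using he _ h

lemma eVVV_eq_sum3 {H : ThreeGraph} {n : ℕ} {X Y Z : Finset ℕ} (hX : X ⊆ range n)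
    (hY : Y ⊆ range n) (hZ : Z ⊆ range n) :
    (eVVV H X Y Z : ℝ) = sum3 n fun x y z => ind (x ∈ X) * ind (y ∈ Y) * ind (z ∈ Z) *
      ind (({x, y, z} : Finset ℕ) ∈ H.edges) := by
  have hsub : ∀ {A : Finset ℕ}, A ⊆ range n → ∀ f : ℕ → ℝ,
      ∑ x ∈ range n, ind (x ∈ A) * f x = ∑ x ∈ A, f x := by
    intro A hA f
    rw [← Finset.sum_subset hA]
    · exact Finset.sum_congr rfl fun x hx => by rw [ind_pos hx, one_mul]
    · exact fun x _ hx => by rw [ind_neg hx, zero_mul]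
  unfold eVVV sum3
  rw [Finset.card_filter, Finset.sum_product]
  simp only [Finset.sum_product]
  push_cast
  simp only [mul_assoc, ← Finset.mul_sum, hsub hX, hsub hY, hsub hZ]
  refine Finset.sum_congr rfl fun x _ => Finset.sum_congr rfl fun y _ =>
    Finset.sum_congr rfl fun z _ => ?_
  unfold ind
  split_ifs <;> rfl

lemma sum3_ind_mem {n : ℕ} {X Y Z : Finset ℕ} (hX : X ⊆ range n)
    (hY : Y ⊆ range n) (hZ : Z ⊆ range n) :
    (sum3 n fun x y z => ind (x ∈ X) * ind (y ∈ Y) * ind (z ∈ Z)) =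
      X.card * Y.card * Z.card := by
  have hsub : ∀ {A : Finset ℕ}, A ⊆ range n → ∑ x ∈ range n, ind (x ∈ A) = A.card := by
    intro A hA
    rw [← Finset.sum_subset hA]
    · simp +contextual [ind_pos]
    · exact fun x _ hx => ind_neg hx
  unfold sum3
  simp only [← Finset.mul_sum, hsub hZ, ← Finset.sum_mul, hsub hY, hsub hX]

lemma sum3_ind_eq (n : ℕ) : (sum3 n fun x y _ => ind (x = y)) = (n : ℝ) ^ 2 := by
  have h : ∀ x ∈ range n, ∑ y ∈ range n, ind (x = y) = 1 := by
    intro x hx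
    rw [Finset.sum_eq_single_of_mem x hx fun y _ hy => ind_neg hy.symm, ind_pos rfl]
  unfold sum3
  simp only [Finset.sum_const, card_range, nsmul_eq_mul, ← Finset.mul_sum]
  rw [Finset.sum_congr rfl h]
  simp [sq]

lemma mem_palColours {P : Palette} {p : ℕ × ℕ × ℕ} (hp : p ∈ P) :
    p.1 ∈ palColours P ∧ p.2.1 ∈ palColours P ∧ p.2.2 ∈ palColours P := by
  simp only [palColours, mem_union, mem_image]
  exact ⟨.inl (.inl ⟨p, hp, rfl⟩), .inl (.inr ⟨p, hp, rfl⟩), .inr ⟨p, hp, rfl⟩⟩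

lemma lamVVV_nonneg {P : Palette} {w : ℕ → ℝ} (hw : IsWeighting P w) : 0 ≤ lamVVV P w := by
  refine Finset.sum_nonneg fun p hp => ?_
  obtain ⟨h1, h2, h3⟩ := mem_palColours hp
  exact mul_nonneg (mul_nonneg (hw.1 _ h1) (hw.1 _ h2)) (hw.1 _ h3)

lemma lamVVV_le_one {P : Palette} {w : ℕ → ℝ} (hw : IsWeighting P w) : lamVVV P w ≤ 1 := by
  set S := palColours P
  calc lamVVV P w ≤ ∑ p ∈ S ×ˢ S ×ˢ S, w p.1 * w p.2.1 * w p.2.2 := by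
        refine Finset.sum_le_sum_of_subset_of_nonneg (fun p hp => ?_) fun p hp _ => ?_
        · simpa only [mem_product] using mem_palColours hp
        · simp only [mem_product] at hp
          exact mul_nonneg (mul_nonneg (hw.1 _ hp.1) (hw.1 _ hp.2.1)) (hw.1 _ hp.2.2)
    _ = 1 := by
        simp only [Finset.sum_product, ← Finset.mul_sum, S, hw.2, mul_one]

/-- The increasing triples forming an edge of the palette graph have density at least about
`lamVVV P w`: `triangle_count` summed over the triples of the palette. -/
lemma ordered_count {P : Palette} {w : ℕ → ℝ} (hw : IsWeighting P w) {n : ℕ}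
    {C : ℕ → ℕ → ℕ} {δ : ℝ}
    (hC : ∀ a ∈ palColours P, ∀ u v : ℕ → ℝ, (∀ x, |u x| ≤ 1) → (∀ y, |v y| ≤ 1) →
      |∑ x ∈ range n, ∑ y ∈ range n, u x * v y * (ind (x < y) * (ind (C x y = a) - w a))| ≤ δ)
    {u v r : ℕ → ℝ} (hu : ∀ x, |u x| ≤ 1) (hv : ∀ x, |v x| ≤ 1) (hr : ∀ x, |r x| ≤ 1) :
    (sum3 n fun x y z => u x * v y * r z * (ind (x < y) * ind (y < z) *
      (ind ((C x y, C y z, C x z) ∈ P) - lamVVV P w))) ≥ -(P.card * (3 * (n * δ))) := by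
  have hw1 : ∀ a ∈ palColours P, |w a| ≤ 1 := fun a ha => by
    rw [abs_of_nonneg (hw.1 a ha)]
    exact hw.2 ▸ Finset.single_le_sum hw.1 ha
  have hind : ∀ a b d : ℕ, ind ((a, b, d) ∈ P) =
      ∑ p ∈ P, ind (a = p.1) * ind (b = p.2.1) * ind (d = p.2.2) := by
    intro a b d
    by_cases h : (a, b, d) ∈ P
    · rw [ind_pos h, Finset.sum_eq_single_of_mem _ h]
      · simp [ind_pos]
      · rintro ⟨a', b', d'⟩ - hne
        by_cases h1 : a = a'
        · by_cases h2 : b = b'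
          · have h3 : d ≠ d' := by
              rintro rfl
              exact hne (by rw [h1, h2])
            rw [ind_neg h3, mul_zero]
          · rw [ind_neg h2, mul_zero, zero_mul]
        · rw [ind_neg h1, zero_mul, zero_mul]
    · rw [ind_neg h, eq_comm]
      refine Finset.sum_eq_zero ?_
      rintro ⟨a', b', d'⟩ hp
      by_cases h1 : a = a'
      · by_cases h2 : b = b'
        · have h3 : d ≠ d' := by
            rintro rfl
            exact h (by rw [h1, h2]; exact hp)
          rw [ind_neg h3, mul_zero]
        · rw [ind_neg h2, mul_zero, zero_mul]
      · rw [ind_neg h1, zero_mul, zero_mul]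
  have hsplit : (sum3 n fun x y z => u x * v y * r z * (ind (x < y) * ind (y < z) *
      (ind ((C x y, C y z, C x z) ∈ P) - lamVVV P w))) =
      ∑ p ∈ P, sum3 n fun x y z => u x * v y * r z * (ind (x < y) * ind (y < z) *
        (ind (C x y = p.1) * ind (C y z = p.2.1) * ind (C x z = p.2.2) -
          w p.1 * w p.2.1 * w p.2.2)) := by
    rw [← sum3_sum]
    congr 1
    funext x y z
    rw [← Finset.mul_sum, ← Finset.mul_sum, Finset.sum_sub_distrib, ← hind]
    rfl
  rw [hsplit]
  refine neg_le_of_abs_le ((Finset.abs_sum_le_sum_abs _ _).trans ?_)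
  calc _ ≤ ∑ p ∈ P, 3 * (n * δ) := Finset.sum_le_sum fun p hp =>
        triangle_count hw1 hC (mem_palColours hp).1 (mem_palColours hp).2.1
          (mem_palColours hp).2.2 hu hv hr
    _ = _ := by simp

/-- At most one of the six orderings of `x, y, z` is increasing, and one is unless two of the three
coincide; in the latter case the equality indicators on the right, with `d ≤ 1`, make up for the
missing term. -/
lemma sum_orders_le (P : Palette) (C : ℕ → ℕ → ℕ) {n x y z : ℕ} (hx : x < n) (hy : y < n)
    (hz : z < n) {d : ℝ} (hd1 : d ≤ 1) (G : ℕ → ℕ → ℕ → ℝ)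
    (hG : ∀ x y z, G x y z =
      ind (x < y) * ind (y < z) * (ind ((C x y, C y z, C x z) ∈ P) - d)) :
    G x y z + G x z y + G y x z + G y z x + G z x y + G z y x ≤
      ind (({x, y, z} : Finset ℕ) ∈ (paletteGraph P C n).edges) - d +
        (ind (x = y) + ind (y = z) + ind (x = z)) := by
  have hpos : ∀ {i j k : ℕ}, i < j → j < k → k < n → ({x, y, z} : Finset ℕ) = {i, j, k} →
      G i j k ≤ ind (({x, y, z} : Finset ℕ) ∈ (paletteGraph P C n).edges) - d := by
    intro i j k hij hjk hk he
    rw [hG, ind_pos hij, ind_pos hjk, he, mem_edges_paletteGraph hij hjk]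
    simp [hk]
  have hE := ind_nonneg (({x, y, z} : Finset ℕ) ∈ (paletteGraph P C n).edges)
  have e1 := ind_nonneg (x = y)
  have e2 := ind_nonneg (y = z)
  have e3 := ind_nonneg (x = z)
  have hz' : ∀ i j k : ℕ, ¬ (i < j ∧ j < k) → G i j k = 0 := fun i j k h => by
    by_cases hij : i < j
    · rw [hG, ind_neg fun hjk => h ⟨hij, hjk⟩, mul_zero, zero_mul]
    · rw [hG, ind_neg hij, zero_mul, zero_mul]
  by_cases hxy : x = y
  · rw [hz' x y z (by omega), hz' x z y (by omega), hz' y x z (by omega), hz' y z x (by omega),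
      hz' z x y (by omega), hz' z y x (by omega), ind_pos hxy]
    linarith
  by_cases hyz : y = z
  · rw [hz' x y z (by omega), hz' x z y (by omega), hz' y x z (by omega), hz' y z x (by omega),
      hz' z x y (by omega), hz' z y x (by omega), ind_pos hyz]
    linarith
  by_cases hxz : x = z
  · rw [hz' x y z (by omega), hz' x z y (by omega), hz' y x z (by omega), hz' y z x (by omega),
      hz' z x y (by omega), hz' z y x (by omega), ind_pos hxz]
    linarith
  rcases lt_or_gt_of_ne hxy with h1 | h1 <;> rcases lt_or_gt_of_ne hyz with h2 | h2 <;>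
    rcases lt_or_gt_of_ne hxz with h3 | h3
  · have := hpos h1 h2 hz rfl
    rw [hz' x z y (by omega), hz' y x z (by omega), hz' y z x (by omega),
      hz' z x y (by omega), hz' z y x (by omega)]
    linarith
  · omega
  · have := hpos h3 h2 hy (by ext; simp; tauto)
    rw [hz' x y z (by omega), hz' y x z (by omega), hz' y z x (by omega),
      hz' z x y (by omega), hz' z y x (by omega)]
    linarith
  · have := hpos h3 h1 hy (by ext; simp; tauto)
    rw [hz' x y z (by omega), hz' x z y (by omega), hz' y x z (by omega), hz' y z x (by omega),
      hz' z y x (by omega)]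
    linarith
  · have := hpos h1 h3 hz (by ext; simp; tauto)
    rw [hz' x y z (by omega), hz' x z y (by omega), hz' y z x (by omega),
      hz' z x y (by omega), hz' z y x (by omega)]
    linarith
  · have := hpos h2 h3 hx (by ext; simp; tauto)
    rw [hz' x y z (by omega), hz' x z y (by omega), hz' y x z (by omega),
      hz' z x y (by omega), hz' z y x (by omega)]
    linarith
  · omega
  · have := hpos h2 h1 hx (by ext; simp; tauto)
    rw [hz' x y z (by omega), hz' x z y (by omega), hz' y x z (by omega), hz' y z x (by omega),
      hz' z x y (by omega)]
    linarith

/-- The density of the palette graph of a quasirandom colouring: `18 = 6 · 3` from six orderings with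
three replacements each, and `3 n²` for the triples with a repeated vertex. -/
lemma eVVV_paletteGraph_ge {P : Palette} {w : ℕ → ℝ} (hw : IsWeighting P w) {n : ℕ}
    {C : ℕ → ℕ → ℕ} {δ : ℝ}
    (hC : ∀ a ∈ palColours P, ∀ u v : ℕ → ℝ, (∀ x, |u x| ≤ 1) → (∀ y, |v y| ≤ 1) →
      |∑ x ∈ range n, ∑ y ∈ range n, u x * v y * (ind (x < y) * (ind (C x y = a) - w a))| ≤ δ)
    {X Y Z : Finset ℕ} (hX : X ⊆ range n) (hY : Y ⊆ range n) (hZ : Z ⊆ range n) :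
    (eVVV (paletteGraph P C n) X Y Z : ℝ) ≥
      lamVVV P w * X.card * Y.card * Z.card -
        (18 * P.card * (n * δ) + 3 * (n : ℝ) ^ 2) := by
  set d := lamVVV P w with hd
  let G : ℕ → ℕ → ℕ → ℝ := fun x y z =>
    ind (x < y) * ind (y < z) * (ind ((C x y, C y z, C x z) ∈ P) - d)
  let I : Finset ℕ → ℕ → ℝ := fun A x => ind (x ∈ A)
  let M : Finset ℕ → Finset ℕ → Finset ℕ → ℝ := fun A B D =>
    sum3 n fun x y z => I A x * I B y * I D z * G x y z
  have hM : ∀ A B D, M A B D ≥ -(P.card * (3 * (n * δ))) := fun A B D =>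
    ordered_count hw hC (fun _ => abs_ind_le_one _) (fun _ => abs_ind_le_one _)
      (fun _ => abs_ind_le_one _)
  let J : ℕ → ℕ → ℕ → ℝ := fun x y z => I X x * I Y y * I Z z
  -- each of the six orderings of `x, y, z` is a count of ordered triples with `X, Y, Z` permuted
  have o1 : (sum3 n fun x y z => J x y z * G x y z) = M X Y Z := rfl
  have o2 : (sum3 n fun x y z => J x y z * G x z y) = M X Z Y := by
    rw [sum3_swap₂₃]
    simp only [M, J]
    congr 1; funext x y z; ring
  have o3 : (sum3 n fun x y z => J x y z * G y x z) = M Y X Z := by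
    rw [sum3_swap₁₂]
    simp only [M, J]
    congr 1; funext x y z; ring
  have o4 : (sum3 n fun x y z => J x y z * G y z x) = M Y Z X := by
    rw [sum3_swap₁₂, sum3_swap₂₃]
    simp only [M, J]
    congr 1; funext x y z; ring
  have o5 : (sum3 n fun x y z => J x y z * G z x y) = M Z X Y := by
    rw [sum3_swap₂₃, sum3_swap₁₂]
    simp only [M, J]
    congr 1; funext x y z; ring
  have o6 : (sum3 n fun x y z => J x y z * G z y x) = M Z Y X := by
    rw [sum3_swap₁₂, sum3_swap₂₃, sum3_swap₁₂]
    simp only [M, J]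
    congr 1; funext x y z; ring
  have hJ0 : ∀ x y z, 0 ≤ J x y z := fun x y z =>
    mul_nonneg (mul_nonneg (ind_nonneg _) (ind_nonneg _)) (ind_nonneg _)
  have hJ1 : ∀ x y z, J x y z ≤ 1 := fun x y z =>
    mul_le_one₀ (mul_le_one₀ (ind_le_one _) (ind_nonneg _) (ind_le_one _)) (ind_nonneg _)
      (ind_le_one _)
  have hkey : sum3 n (fun x y z => J x y z * G x y z + J x y z * G x z y + J x y z * G y x z +
        J x y z * G y z x + J x y z * G z x y + J x y z * G z y x + d * J x y z) ≤
      sum3 n (fun x y z =>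
        J x y z * ind (({x, y, z} : Finset ℕ) ∈ (paletteGraph P C n).edges) +
          ind (x = y) + ind (y = z) + ind (x = z)) := by
    refine sum3_mono fun x hx y hy z hz => ?_
    have h := mul_le_mul_of_nonneg_left (sum_orders_le P C hx hy hz
      (lamVVV_le_one hw) G fun _ _ _ => rfl) (hJ0 x y z)
    have h' := mul_le_of_le_one_left (add_nonneg (add_nonneg (ind_nonneg (x = y))
      (ind_nonneg (y = z))) (ind_nonneg (x = z))) (hJ1 x y z)
    linarith
  have hdJ : (sum3 n fun x y z => d * J x y z) = d * (X.card * Y.card * Z.card) := by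
    rw [← sum3_ind_mem hX hY hZ]
    simp only [sum3, Finset.mul_sum, J, I]
  have q2 : (sum3 n fun _ y z => ind (y = z)) = (n : ℝ) ^ 2 := by
    rw [sum3_swap₁₂, sum3_swap₂₃, sum3_ind_eq]
  have q3 : (sum3 n fun x _ z => ind (x = z)) = (n : ℝ) ^ 2 := by
    rw [sum3_swap₂₃, sum3_ind_eq]
  have hE : (sum3 n fun x y z =>
      J x y z * ind (({x, y, z} : Finset ℕ) ∈ (paletteGraph P C n).edges)) =
      eVVV (paletteGraph P C n) X Y Z := (eVVV_eq_sum3 hX hY hZ).symm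
  simp only [sum3_add] at hkey
  rw [o1, o2, o3, o4, o5, o6, hdJ, q2, q3, sum3_ind_eq, hE] at hkey
  have := hM X Y Z
  have := hM X Z Y
  have := hM Y X Z
  have := hM Y Z X
  have := hM Z X Y
  have := hM Z Y X
  linarith

lemma exists_dense {P : Palette} {w : ℕ → ℝ} (hw : IsWeighting P w) {η : ℝ} (hη : 0 < η)
    (N : ℕ) : ∃ H : ThreeGraph, N ≤ H.verts.card ∧ Satisfies H P ∧
      IsDenseVVV H (lamVVV P w) η := by
  -- `ε` makes the six triangle-counting errors total at most `η n³ / 2`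
  let ε : ℝ := η / (36 * P.card + 1)
  have hε : 0 < ε := by positivity
  have hεP : 18 * P.card * ε ≤ η / 2 := by
    simp only [ε]
    rw [mul_div_assoc', div_le_div_iff₀ (by positivity) (by norm_num)]
    nlinarith
  obtain ⟨m₁, hm₁⟩ := exists_nat_ge (2 * (palColours P).card / ε ^ 4)
  obtain ⟨m₂, hm₂⟩ := exists_nat_ge (6 / η)
  let n := max N (max m₁ m₂)
  have hn₁ : (m₁ : ℝ) ≤ n := by
    exact_mod_cast (le_max_left m₁ m₂).trans (le_max_right _ _)
  have hn₂ : (m₂ : ℝ) ≤ n := by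
    exact_mod_cast (le_max_right m₁ m₂).trans (le_max_right _ _)
  have hnS : 2 * (palColours P).card ≤ ε ^ 4 * n := by
    have := hm₁.trans hn₁
    rwa [div_le_iff₀' (by positivity)] at this
  have hnη : 6 ≤ η * n := by
    have := hm₂.trans hn₂
    rwa [div_le_iff₀' hη] at this
  obtain ⟨C, hCS, hC⟩ := exists_colouring hw.1 hw.2 hε.le hnS
  refine ⟨paletteGraph P C n, ?_, satisfies_paletteGraph hCS n, fun X Y Z hX hY hZ => ?_⟩
  · exact (le_max_left N _).trans (card_range n).ge
  · have hcard : (paletteGraph P C n).verts.card = n := card_range n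
    rw [hcard]
    refine le_trans ?_ (eVVV_paletteGraph_ge hw hC hX hY hZ)
    have h1 : 18 * P.card * (n * (ε * (n : ℝ) ^ 2)) ≤ η / 2 * (n : ℝ) ^ 3 := by
      calc _ = 18 * P.card * ε * (n : ℝ) ^ 3 := by ring
        _ ≤ _ := by gcongr
    have h2 : 3 * (n : ℝ) ^ 2 ≤ η / 2 * (n : ℝ) ^ 3 := by
      calc 3 * (n : ℝ) ^ 2 ≤ η * n / 2 * (n : ℝ) ^ 2 := by gcongr; linarith
        _ = _ := by ring
    linarith

/-- If no member of a family 𝓕 satisfies the palette 𝒫, then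
π_▽(𝓕) ≥ Λ^▽_𝒫. -/
theorem palette_lower_bound_VVV (P : Palette) (𝓕 : Set ThreeGraph)
    (h : ∀ F ∈ 𝓕, ¬ Satisfies F P) :
    LambdaVVV P ≤ piVVV 𝓕 := by
  refine Real.sSup_le ?_ (Real.sSup_nonneg fun d hd => hd.1)
  rintro _ ⟨w, hw, rfl⟩
  refine le_csSup ⟨1, fun d hd => hd.2.1⟩ ⟨lamVVV_nonneg hw, lamVVV_le_one hw, fun η hη N => ?_⟩
  obtain ⟨H, hN, hsat, hdense⟩ := exists_dense hw hη N
  exact ⟨H, hN, fun F hF hFH => h F hF (hsat.of_isSubhypergraph hFH), hdense⟩
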